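/- For every integer n ≥ 1, all integers k, m ≥ 0 and every t > 0, one has ∫_0^π ∫_0^{π/2} p_t(r,η)·(sin((m+1)η)/sin η)·(cos r)^m·P_k^{(2n−1,m+1)}(cos 2r)·(8π^{2n+1}/Γ(2n))·(sin r)^{4n−1}·(cos r)^3·(sin η)^2 dr dη = e^{−4[k(k+2n+m+1)+nm]t}·(m+1)·C(k+2n−1, k). In particular, as t → 0⁺ this integral tends to (m+1)·C(k+2n−1,k), the value of the test function (sin((m+1)η)/sin η)·(cos r)^m·P_k^{(2n−1,m+1)}(cos 2r) at (r,η)=(0,0). -/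

import Mathlib

open Real MeasureTheory Filter Topology Set

noncomputable section

/-- The defining formula of the Jacobi polynomial `P_k^{(α,β)}` on `(-1,1)`. -/
def jacobiFormula (k α β : ℕ) (x : ℝ) : ℝ :=
  ((-1 : ℝ) ^ k / (2 ^ k * Nat.factorial k)) * (1 - x) ^ (-(α : ℤ)) * (1 + x) ^ (-(β : ℤ)) *
    iteratedDeriv k (fun y => (1 - y) ^ (α + k) * (1 + y) ^ (β + k)) x

/-- `J k α β` is the Jacobi polynomial `P_k^{(α,β)}`: a polynomial function satisfying the
defining formula on `(-1,1)`. -/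
def IsJacobi (J : ℕ → ℕ → ℕ → ℝ → ℝ) : Prop :=
  ∀ k α β : ℕ, (∃ p : Polynomial ℝ, ∀ x : ℝ, J k α β x = p.eval x) ∧
    ∀ x ∈ Set.Ioo (-1 : ℝ) 1, J k α β x = jacobiFormula k α β x

/-- The vertical factor `sin((m+1)η)/sin η`, extended by its limit `m+1` at `η = 0`. -/
def vertFactor (m : ℕ) (η : ℝ) : ℝ :=
  if η = 0 then (m + 1 : ℝ) else Real.sin ((m + 1) * η) / Real.sin η

/-- The general term of the double series defining the subelliptic heat kernel of the
quaternionic Hopf fibration on `S^{4n+3}`. -/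
def pTerm (n : ℕ) (J : ℕ → ℕ → ℕ → ℝ → ℝ) (t r η : ℝ) (mk : ℕ × ℕ) : ℝ :=
  (Real.Gamma (2 * n) / (2 * Real.pi ^ (2 * n + 2))) *
    (2 * (mk.2 : ℝ) + mk.1 + 2 * n + 1) * ((mk.1 : ℝ) + 1) *
    (Nat.choose (mk.2 + mk.1 + 2 * n) (2 * n - 1) : ℝ) *
    Real.exp (-(4 * ((mk.2 : ℝ) * (mk.2 + 2 * n + mk.1 + 1) + n * mk.1)) * t) *
    vertFactor mk.1 η * Real.cos r ^ mk.1 * J mk.2 (2 * n - 1) (mk.1 + 1) (Real.cos (2 * r))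

/-- The subelliptic heat kernel of the quaternionic Hopf fibration on `S^{4n+3}`. -/
def pKernel (n : ℕ) (J : ℕ → ℕ → ℕ → ℝ → ℝ) (t r η : ℝ) : ℝ :=
  ∑' mk : ℕ × ℕ, pTerm n J t r η mk

/-- The defining formula of the Gegenbauer polynomial `C_m^{2n+1}` on `(-1,1)`. -/
def gegenbauerFormula (n m : ℕ) (x : ℝ) : ℝ :=
  ((-1 : ℝ) ^ m / 2 ^ m) *
    (Real.Gamma ((m : ℝ) + 4 * n + 2) * Real.Gamma (2 * (n : ℝ) + 3 / 2) /
      (Real.Gamma (4 * (n : ℝ) + 2) * Real.Gamma ((m : ℝ) + 1) *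
        Real.Gamma (2 * (n : ℝ) + m + 3 / 2))) *
    (1 - x ^ 2) ^ (-(2 * (n : ℝ) + 1 / 2)) *
    iteratedDeriv m (fun y => (1 - y ^ 2) ^ (2 * (n : ℝ) + m + 1 / 2)) x

/-- `C m` is the Gegenbauer polynomial `C_m^{2n+1}`. -/
def IsGegenbauer (n : ℕ) (C : ℕ → ℝ → ℝ) : Prop :=
  ∀ m : ℕ, (∃ p : Polynomial ℝ, ∀ x : ℝ, C m x = p.eval x) ∧
    ∀ x ∈ Set.Ioo (-1 : ℝ) 1, C m x = gegenbauerFormula n m x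

/-- The Riemannian heat kernel of `S^{4n+3}`. -/
def qKernel (n : ℕ) (C : ℕ → ℝ → ℝ) (t x : ℝ) : ℝ :=
  (Real.Gamma (2 * n + 1) / (2 * Real.pi ^ (2 * n + 2))) *
    ∑' m : ℕ, ((m : ℝ) + 2 * n + 1) * Real.exp (-((m : ℝ) * (m + 4 * n + 2)) * t) * C m x

/-- The general term of the double series defining the subelliptic heat kernel on `CP^{2n+1}`. -/
def hTerm (n : ℕ) (J : ℕ → ℕ → ℕ → ℝ → ℝ) (t r φ : ℝ) (mk : ℕ × ℕ) : ℝ :=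
  (Real.Gamma (2 * n) / (4 * Real.pi ^ (2 * n + 2))) *
    (2 * (mk.2 : ℝ) + 2 * mk.1 + 2 * n + 1) * (2 * (mk.1 : ℝ) + 1) *
    (Nat.choose (mk.2 + 2 * mk.1 + 2 * n) (2 * n - 1) : ℝ) *
    Real.exp (-(4 * (mk.2 : ℝ) * (mk.2 + 2 * n + 2 * mk.1 + 1) + 8 * n * mk.1) * t) *
    Real.cos r ^ (2 * mk.1) * J mk.1 0 0 (Real.cos (2 * φ)) *
    J mk.2 (2 * n - 1) (2 * mk.1 + 1) (Real.cos (2 * r))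

/-- The subelliptic heat kernel of the fibration `CP^1 → CP^{2n+1} → HP^n`. -/
def hKernel (n : ℕ) (J : ℕ → ℕ → ℕ → ℝ → ℝ) (t r φ : ℝ) : ℝ :=
  ∑' mk : ℕ × ℕ, hTerm n J t r φ mk

end

noncomputable section

open Polynomial
open scoped Nat

/-!
The functions `φ_{m,k}(r, η) = (sin ((m+1)η) / sin η) (cos r)^m P_k^{(2n-1,m+1)}(cos 2r)` are
orthogonal for the cylindric measure: the `η`-integral is the orthogonality of sines, and the
substitution `x = cos 2r` turns the `r`-integral into the orthogonality of Jacobi polynomials, which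
follows from Rodrigues' formula, integration by parts and the beta integral. The norms satisfy
`α_{k,m} ‖φ_{m,k}‖² = (m+1) C(k+2n-1, k) = φ_{m,k}(0, 0)`.

The heat kernel may be integrated term by term because its series is dominated uniformly in
`(r, η)`: every coefficient and sup norm is polynomial in `N = 2k+m+2n+1` times
`C(N, k) ≤ A^k e^{δN}`, with `δ > 0` as small as we like, while the exponential contributes at most
`e^{-4tm} e^{-4tk²}`. Only the term of index `(m, k)` survives integration against `φ_{m,k}`.
-/

/-! ### Integration by parts and the beta integral -/

theorem iteratedDeriv_polynomial_eval (p : ℝ[X]) (k : ℕ) :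
    iteratedDeriv k (fun x => p.eval x) = fun x => (derivative^[k] p).eval x := by
  induction k with
  | zero => simp
  | succ k ih =>
    funext x
    rw [iteratedDeriv_succ, ih, Function.iterate_succ_apply', Polynomial.deriv]

theorem integral_eval_derivative_mul_eval (p q : ℝ[X]) {a b : ℝ}
    (ha : p.eval a = 0) (hb : p.eval b = 0) :
    ∫ x in a..b, (derivative p).eval x * q.eval x =
      -∫ x in a..b, p.eval x * (derivative q).eval x := by
  have parts := intervalIntegral.integral_mul_deriv_eq_deriv_mul
    (fun x _ => p.hasDerivAt x) (fun x _ => q.hasDerivAt x)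
    (p.derivative.continuous.intervalIntegrable a b)
    (q.derivative.continuous.intervalIntegrable a b)
  rw [parts, ha, hb]
  ring

theorem integral_eval_iterate_derivative_mul_eval (p q : ℝ[X]) {a b : ℝ} (k : ℕ)
    (ha : ∀ j < k, (derivative^[j] p).eval a = 0) (hb : ∀ j < k, (derivative^[j] p).eval b = 0) :
    ∫ x in a..b, (derivative^[k] p).eval x * q.eval x =
      (-1) ^ k * ∫ x in a..b, p.eval x * (derivative^[k] q).eval x := by
  induction k generalizing q with
  | zero => simp
  | succ k ih =>
    rw [Function.iterate_succ_apply',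
      integral_eval_derivative_mul_eval _ _ (ha k k.lt_succ_self) (hb k k.lt_succ_self),
      ih _ (fun j hj => ha j (hj.trans k.lt_succ_self))
        (fun j hj => hb j (hj.trans k.lt_succ_self)),
      ← Function.iterate_succ_apply, pow_succ]
    ring

theorem integral_pow_mul_sub_pow (a b : ℕ) {c : ℝ} (hc : 0 < c) :
    ∫ x in (0 : ℝ)..c, x ^ a * (c - x) ^ b = c ^ (a + b + 1) * (a ! * b ! / (a + b + 1)!) := by
  have scaled := Complex.betaIntegral_scaled (a + 1) (b + 1) hc
  rw [Complex.betaIntegral_eq_Gamma_mul_div _ _ (by norm_cast; simp) (by norm_cast; simp),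
    Complex.Gamma_nat_eq_factorial, Complex.Gamma_nat_eq_factorial,
    show (a + 1 + (b + 1) : ℂ) = ((a + b + 1 : ℕ) : ℂ) + 1 by push_cast; ring,
    Complex.Gamma_nat_eq_factorial] at scaled
  simp only [add_sub_cancel_right, Complex.cpow_natCast] at scaled
  apply Complex.ofReal_injective
  rw [← intervalIntegral.integral_ofReal]
  push_cast
  rw [scaled]

theorem integral_one_sub_pow_mul_one_add_pow (a b : ℕ) :
    ∫ x in (-1 : ℝ)..1, (1 - x) ^ a * (1 + x) ^ b =
      2 ^ (a + b + 1) * (a ! * b ! / (a + b + 1)!) := by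
  have shift := intervalIntegral.integral_comp_sub_left (a := -1) (b := 1)
    (fun x : ℝ => x ^ a * (2 - x) ^ b) 1
  norm_num at shift
  rw [← integral_pow_mul_sub_pow a b two_pos, ← shift]
  ring_nf

/-! ### Jacobi polynomials -/

/-- The weight `(1 - X)^α (1 + X)^β` of the Jacobi polynomials, as a polynomial. -/
def jacobiWeight (α β : ℕ) : ℝ[X] := (1 - X) ^ α * (1 + X) ^ β

/-- The Jacobi polynomial `P_k^{(α,β)}`, written in powers of `X - 1` and `X + 1`. -/
def jacobiPoly (k α β : ℕ) : ℝ[X] :=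
  ∑ i ∈ Finset.range (k + 1),
    C (((α + k).choose (k - i) * (β + k).choose i : ℕ) / 2 ^ k : ℝ) *
      ((X - C 1) ^ i * (X + C 1) ^ (k - i))

theorem eval_jacobiWeight (α β : ℕ) (x : ℝ) :
    (jacobiWeight α β).eval x = (1 - x) ^ α * (1 + x) ^ β := by
  simp [jacobiWeight]

theorem eval_one_iterate_derivative_jacobiWeight {α j : ℕ} (β : ℕ) (hj : j < α) :
    (derivative^[j] (jacobiWeight α β)).eval 1 = 0 := by
  obtain ⟨q, hq⟩ : (1 - X) ^ (α - j) ∣ derivative^[j] (jacobiWeight α β) :=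
    pow_sub_dvd_iterate_derivative_of_pow_dvd _ (Dvd.intro _ rfl)
  simp [hq, Nat.sub_ne_zero_of_lt hj]

theorem eval_neg_one_iterate_derivative_jacobiWeight (α : ℕ) {β j : ℕ} (hj : j < β) :
    (derivative^[j] (jacobiWeight α β)).eval (-1) = 0 := by
  obtain ⟨q, hq⟩ : (1 + X) ^ (β - j) ∣ derivative^[j] (jacobiWeight α β) :=
    pow_sub_dvd_iterate_derivative_of_pow_dvd _ (Dvd.intro_left _ rfl)
  simp [hq, Nat.sub_ne_zero_of_lt hj]

theorem iterate_derivative_one_sub_X_pow {R : Type*} [CommRing R] (a j : ℕ) :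
    derivative^[j] ((1 - X : R[X]) ^ a) =
      C ((-1) ^ j * a.descFactorial j : R) * (1 - X) ^ (a - j) := by
  have h := iterate_derivative_comp_one_sub_X (X ^ a : R[X]) j
  rw [iterate_derivative_X_pow_eq_natCast_mul] at h
  simpa [mul_assoc] using h

theorem add_choose_mul_descFactorial_mul_descFactorial (a b i j : ℕ) :
    (i + j).choose i * a.descFactorial j * b.descFactorial i =
      (i + j)! * (a.choose j * b.choose i) := by
  rw [Nat.descFactorial_eq_factorial_mul_choose, Nat.descFactorial_eq_factorial_mul_choose,
    ← Nat.add_choose_mul_factorial_mul_factorial, Nat.choose_symm_add]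
  ring

-- Rodrigues' formula; the sum defining `jacobiPoly` is the Leibniz expansion of the left side.
theorem iterate_derivative_jacobiWeight (k α β : ℕ) :
    derivative^[k] (jacobiWeight (α + k) (β + k)) =
      C ((-2) ^ k * k ! : ℝ) * (jacobiWeight α β * jacobiPoly k α β) := by
  rw [jacobiWeight, jacobiPoly, jacobiWeight, iterate_derivative_mul, Finset.mul_sum,
    Finset.mul_sum]
  refine Finset.sum_congr rfl fun i hi => ?_
  obtain ⟨j, rfl⟩ := Nat.exists_eq_add_of_le (Finset.mem_range_succ_iff.mp hi)
  have one_add : (1 + X : ℝ[X]) = X + C 1 := by simp [add_comm]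
  have sub_one : (X - C 1 : ℝ[X]) ^ i = C ((-1) ^ i) * (1 - X) ^ i := by simp [← mul_pow]
  have sign : (-2 : ℝ) ^ (i + j) * (-1) ^ i / 2 ^ (i + j) = (-1) ^ j := by
    rw [mul_div_right_comm, ← div_pow, pow_add, mul_right_comm, ← mul_pow]
    norm_num
  have coefficient : ((i + j).choose i : ℝ) * ((-1) ^ j * ((α + (i + j)).descFactorial j : ℝ)) *
      ((β + (i + j)).descFactorial i : ℝ) = (-2) ^ (i + j) * (i + j)! *
        (((α + (i + j)).choose j * (β + (i + j)).choose i : ℕ) / 2 ^ (i + j)) * (-1) ^ i := by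
    have h : (((i + j).choose i * (α + (i + j)).descFactorial j * (β + (i + j)).descFactorial i :
        ℕ) : ℝ) = ((i + j)! * ((α + (i + j)).choose j * (β + (i + j)).choose i) : ℕ) :=
      congrArg _ (add_choose_mul_descFactorial_mul_descFactorial _ _ i j)
    rw [← sign]
    push_cast at h ⊢
    linear_combination (-2 : ℝ) ^ (i + j) * (-1) ^ i / 2 ^ (i + j) * h
  rw [Nat.add_sub_cancel_left, iterate_derivative_one_sub_X_pow, one_add,
    iterate_derivative_X_add_pow, sub_one,
    show α + (i + j) - j = α + i by omega, show β + (i + j) - i = β + j by omega]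
  have coefficient_C := congrArg (C : ℝ → ℝ[X]) coefficient
  simp only [C_mul, map_natCast, nsmul_eq_mul, pow_add (1 - X : ℝ[X]),
    pow_add (X + C 1 : ℝ[X])] at coefficient_C ⊢
  linear_combination ((1 - X) ^ α * (1 - X) ^ i * (X + C 1) ^ β * (X + C 1) ^ j) * coefficient_C

theorem sum_choose_mul_choose (a b k : ℕ) :
    ∑ i ∈ Finset.range (k + 1), a.choose (k - i) * b.choose i = (a + b).choose k := by
  rw [add_comm a, Nat.add_choose_eq, Finset.Nat.sum_antidiagonal_eq_sum_range_succ
    (fun i j => b.choose i * a.choose j)]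
  exact Finset.sum_congr rfl fun i _ => mul_comm _ _

namespace jacobiPoly

theorem natDegree_le (k α β : ℕ) : (jacobiPoly k α β).natDegree ≤ k := by
  refine natDegree_sum_le_of_forall_le _ _ fun i hi => (natDegree_C_mul_le _ _).trans ?_
  refine natDegree_mul_le.trans ?_
  have := Finset.mem_range_succ_iff.mp hi
  simp only [natDegree_pow, natDegree_X_sub_C, natDegree_X_add_C]
  omega

theorem coeff_self (k α β : ℕ) :
    (jacobiPoly k α β).coeff k = ((2 * k + α + β).choose k : ℝ) / 2 ^ k := by
  rw [show 2 * k + α + β = (α + k) + (β + k) by ring, ← sum_choose_mul_choose, jacobiPoly,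
    finsetSum_coeff, Nat.cast_sum, Finset.sum_div]
  refine Finset.sum_congr rfl fun i hi => ?_
  have hik := Finset.mem_range_succ_iff.mp hi
  have monic : ((X - C (1 : ℝ)) ^ i * (X + C 1) ^ (k - i)).Monic :=
    ((monic_X_sub_C _).pow _).mul ((monic_X_add_C _).pow _)
  have degree : ((X - C (1 : ℝ)) ^ i * (X + C 1) ^ (k - i)).natDegree = k := by
    rw [((monic_X_sub_C _).pow _).natDegree_mul ((monic_X_add_C _).pow _)]
    simp only [natDegree_pow, natDegree_X_sub_C, natDegree_X_add_C]
    omega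
  have leading := monic.coeff_natDegree
  rw [degree] at leading
  rw [coeff_C_mul, leading, mul_one]

theorem iterate_derivative_self (k α β : ℕ) :
    derivative^[k] (jacobiPoly k α β) = C (k ! * (((2 * k + α + β).choose k : ℝ) / 2 ^ k)) := by
  have degree := natDegree_iterate_derivative (jacobiPoly k α β) k
  have := natDegree_le k α β
  rw [eq_C_of_natDegree_le_zero (degree.trans (by omega)), coeff_iterate_derivative, zero_add,
    coeff_self, Nat.descFactorial_self, nsmul_eq_mul]

theorem abs_eval_le (k α β : ℕ) {x : ℝ} (hx : x ∈ Icc (-1) 1) :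
    |(jacobiPoly k α β).eval x| ≤ (2 * k + α + β).choose k := by
  have sub_le : |x - 1| ≤ 2 := abs_le.mpr ⟨by linarith [hx.1], by linarith [hx.2]⟩
  have add_le : |x + 1| ≤ 2 := abs_le.mpr ⟨by linarith [hx.1], by linarith [hx.2]⟩
  rw [show 2 * k + α + β = (α + k) + (β + k) by ring, ← sum_choose_mul_choose, jacobiPoly,
    eval_finsetSum, Nat.cast_sum]
  refine (Finset.abs_sum_le_sum_abs _ _).trans (Finset.sum_le_sum fun i hi => ?_)
  have hik := Finset.mem_range_succ_iff.mp hi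
  simp only [eval_mul, eval_C, eval_pow, eval_sub, eval_X, eval_add]
  rw [abs_mul, abs_mul, abs_pow, abs_pow, abs_of_nonneg (by positivity), div_mul_eq_mul_div,
    div_le_iff₀ (by positivity)]
  gcongr
  calc |x - 1| ^ i * |x + 1| ^ (k - i) ≤ 2 ^ i * 2 ^ (k - i) := by gcongr
    _ = 2 ^ k := by rw [← pow_add, Nat.add_sub_cancel' hik]

theorem integral_jacobiWeight_mul_mul (k α β : ℕ) (q : ℝ[X]) :
    ∫ x in (-1 : ℝ)..1, (jacobiWeight α β).eval x * ((jacobiPoly k α β).eval x * q.eval x) =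
      (2 ^ k * k ! : ℝ)⁻¹ *
        ∫ x in (-1 : ℝ)..1, (jacobiWeight (α + k) (β + k)).eval x * (derivative^[k] q).eval x := by
  have parts := integral_eval_iterate_derivative_mul_eval (jacobiWeight (α + k) (β + k)) q k
    (fun j hj => eval_neg_one_iterate_derivative_jacobiWeight _ (hj.trans_le (k.le_add_left β)))
    (fun j hj => eval_one_iterate_derivative_jacobiWeight _ (hj.trans_le (k.le_add_left α)))
  simp only [iterate_derivative_jacobiWeight, eval_mul, eval_C, mul_assoc,
    intervalIntegral.integral_const_mul] at parts
  rw [neg_pow 2, mul_assoc] at parts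
  rw [eq_inv_mul_iff_mul_eq₀ (by positivity), mul_assoc]
  exact mul_left_cancel₀ (pow_ne_zero k (by norm_num)) parts

theorem integral_jacobiWeight_mul_eq_zero {k : ℕ} (α β : ℕ) {q : ℝ[X]} (hq : q.natDegree < k) :
    ∫ x in (-1 : ℝ)..1, (jacobiWeight α β).eval x * ((jacobiPoly k α β).eval x * q.eval x) = 0 := by
  simp [integral_jacobiWeight_mul_mul, iterate_derivative_eq_zero hq]

theorem integral_jacobiWeight_mul_self (k α β : ℕ) :
    ∫ x in (-1 : ℝ)..1, (jacobiWeight α β).eval x *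
        ((jacobiPoly k α β).eval x * (jacobiPoly k α β).eval x) =
      2 ^ (α + β + 1) * ((α + k)! * (β + k)!) / ((2 * k + α + β + 1) * k ! * (k + α + β)!) := by
  rw [integral_jacobiWeight_mul_mul, iterate_derivative_self]
  simp only [eval_C, eval_jacobiWeight]
  rw [intervalIntegral.integral_mul_const, integral_one_sub_pow_mul_one_add_pow,
    show α + k + (β + k) + 1 = k + (k + α + β) + 1 by ring,
    show 2 * k + α + β = k + (k + α + β) by ring, Nat.factorial_succ, Nat.cast_add_choose,
    show k + (k + α + β) + 1 = k + k + (α + β + 1) by ring, pow_add 2 (k + k), pow_add 2 k k]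
  push_cast
  field_simp
  ring

theorem integral_jacobiWeight_mul_of_ne {k l : ℕ} (α β : ℕ) (hkl : k ≠ l) :
    ∫ x in (-1 : ℝ)..1, (jacobiWeight α β).eval x *
      ((jacobiPoly k α β).eval x * (jacobiPoly l α β).eval x) = 0 := by
  rcases hkl.lt_or_gt with hlt | hlt
  · simp only [mul_comm ((jacobiPoly k α β).eval _)]
    exact integral_jacobiWeight_mul_eq_zero α β ((natDegree_le k α β).trans_lt hlt)
  · exact integral_jacobiWeight_mul_eq_zero α β ((natDegree_le l α β).trans_lt hlt)

end jacobiPoly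

theorem jacobiFormula_eq_eval_jacobiPoly (k α β : ℕ) {x : ℝ} (hx : x ∈ Ioo (-1) 1) :
    jacobiFormula k α β x = (jacobiPoly k α β).eval x := by
  have one_sub_ne : 1 - x ≠ 0 := by linarith [hx.2]
  have one_add_ne : 1 + x ≠ 0 := by linarith [hx.1]
  have sign : (-1 : ℝ) ^ k * (-2) ^ k = 2 ^ k := by rw [← mul_pow]; norm_num
  simp only [jacobiFormula, ← eval_jacobiWeight]
  simp only [iteratedDeriv_polynomial_eval]
  rw [iterate_derivative_jacobiWeight, eval_mul, eval_mul, eval_C,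
    eval_jacobiWeight, zpow_neg, zpow_neg, zpow_natCast, zpow_natCast]
  field_simp
  linear_combination (jacobiPoly k α β).eval x * sign

theorem IsJacobi.eq_eval_jacobiPoly {J : ℕ → ℕ → ℕ → ℝ → ℝ} (hJ : IsJacobi J) (k α β : ℕ) :
    J k α β = fun x => (jacobiPoly k α β).eval x := by
  obtain ⟨⟨p, hp⟩, formula⟩ := hJ k α β
  have p_eq : p = jacobiPoly k α β :=
    eq_of_infinite_eval_eq p _ <| (Ioo_infinite (show (-1 : ℝ) < 1 by norm_num)).mono
      fun x hx => by
        rw [mem_ofPred_eq, ← hp, formula x hx, jacobiFormula_eq_eval_jacobiPoly k α β hx]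
  funext x
  rw [hp, p_eq]

/-! ### Trigonometric integrals -/

theorem integral_comp_cos_two_mul {f : ℝ → ℝ} (hf : Continuous f) (α β : ℕ) :
    ∫ r in (0 : ℝ)..π / 2, f (cos (2 * r)) * sin r ^ (2 * α + 1) * cos r ^ (2 * β + 1) =
      (2 ^ (α + β + 2))⁻¹ * ∫ x in (-1 : ℝ)..1, (jacobiWeight α β).eval x * f x := by
  have substitution := intervalIntegral.integral_comp_mul_deriv (a := 0) (b := π / 2)
    (f := fun r => cos (2 * r)) (f' := fun r => -sin (2 * r) * 2)
    (g := fun x => (jacobiWeight α β).eval x * f x)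
    (fun r _ => by simpa using ((hasDerivAt_id r).const_mul 2).cos) (by fun_prop) (by fun_prop)
  have integrand (r : ℝ) : (jacobiWeight α β).eval (cos (2 * r)) * f (cos (2 * r)) *
      (-sin (2 * r) * 2) =
        -2 ^ (α + β + 2) * (f (cos (2 * r)) * sin r ^ (2 * α + 1) * cos r ^ (2 * β + 1)) := by
    have one_sub_cos : 1 - cos (2 * r) = 2 * sin r ^ 2 := by rw [cos_two_mul, cos_sq']; ring
    have one_add_cos : 1 + cos (2 * r) = 2 * cos r ^ 2 := by rw [cos_two_mul]; ring
    rw [eval_jacobiWeight, one_sub_cos, one_add_cos, sin_two_mul]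
    ring
  simp only [Function.comp_apply, integrand, intervalIntegral.integral_const_mul, mul_zero,
    cos_zero, mul_div_cancel₀ π two_ne_zero, cos_pi] at substitution
  rw [intervalIntegral.integral_symm (-1) 1, neg_mul, neg_inj] at substitution
  rw [← substitution, inv_mul_cancel_left₀ (by positivity)]

theorem integral_jacobiPoly_cos_two_mul_of_ne {k l : ℕ} (α β : ℕ) (hkl : k ≠ l) :
    ∫ r in (0 : ℝ)..π / 2, (jacobiPoly k α β).eval (cos (2 * r)) *
      (jacobiPoly l α β).eval (cos (2 * r)) * sin r ^ (2 * α + 1) * cos r ^ (2 * β + 1) = 0 := by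
  rw [integral_comp_cos_two_mul
      (f := fun x => (jacobiPoly k α β).eval x * (jacobiPoly l α β).eval x) (by fun_prop),
    jacobiPoly.integral_jacobiWeight_mul_of_ne α β hkl, mul_zero]

theorem integral_jacobiPoly_cos_two_mul_self (k α β : ℕ) :
    ∫ r in (0 : ℝ)..π / 2, (jacobiPoly k α β).eval (cos (2 * r)) *
        (jacobiPoly k α β).eval (cos (2 * r)) * sin r ^ (2 * α + 1) * cos r ^ (2 * β + 1) =
      (α + k)! * (β + k)! / (2 * (2 * k + α + β + 1) * k ! * (k + α + β)!) := by
  rw [integral_comp_cos_two_mul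
      (f := fun x => (jacobiPoly k α β).eval x * (jacobiPoly k α β).eval x) (by fun_prop),
    jacobiPoly.integral_jacobiWeight_mul_self, pow_succ 2 (α + β + 1)]
  field_simp

theorem integral_cos_int_mul {c : ℤ} (hc : c ≠ 0) : ∫ x in (0 : ℝ)..π, cos (c * x) = 0 := by
  rw [intervalIntegral.integral_comp_mul_left _ (Int.cast_ne_zero.mpr hc)]
  simp [sin_int_mul_pi]

theorem integral_sin_nat_mul_sin_nat_mul_of_ne {a b : ℕ} (hab : a ≠ b) :
    ∫ x in (0 : ℝ)..π, sin (a * x) * sin (b * x) = 0 := by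
  have product_to_sum (x : ℝ) : sin (a * x) * sin (b * x) =
      (1 / 2) * (cos ((a - b : ℤ) * x) - cos ((a + b : ℤ) * x)) := by
    push_cast
    rw [sub_mul, add_mul, cos_sub, cos_add]
    ring
  simp only [product_to_sum, intervalIntegral.integral_const_mul]
  rw [intervalIntegral.integral_sub
    ((by fun_prop : Continuous _).intervalIntegrable _ _)
    ((by fun_prop : Continuous _).intervalIntegrable _ _),
    integral_cos_int_mul (by omega), integral_cos_int_mul (by omega)]
  norm_num

theorem integral_sin_nat_mul_sq {a : ℕ} (ha : a ≠ 0) :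
    ∫ x in (0 : ℝ)..π, sin (a * x) ^ 2 = π / 2 := by
  rw [intervalIntegral.integral_comp_mul_left (fun x => sin x ^ 2) (Nat.cast_ne_zero.mpr ha),
    integral_sin_sq]
  have : (a : ℝ) ≠ 0 := Nat.cast_ne_zero.mpr ha
  simp only [mul_zero, sin_zero, sin_nat_mul_pi, smul_eq_mul]
  field_simp
  ring

theorem abs_sin_nat_mul_le (a : ℕ) (x : ℝ) : |sin (a * x)| ≤ a * |sin x| := by
  induction a with
  | zero => simp
  | succ a ih =>
    push_cast
    rw [add_one_mul, sin_add]
    calc |sin (a * x) * cos x + cos (a * x) * sin x|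
        ≤ |sin (a * x)| * |cos x| + |cos (a * x)| * |sin x| := by
          simpa only [abs_mul] using abs_add_le (sin (a * x) * cos x) (cos (a * x) * sin x)
      _ ≤ |sin (a * x)| * 1 + 1 * |sin x| := by
          gcongr <;> exact abs_cos_le_one _
      _ ≤ (a + 1) * |sin x| := by linarith

/-! ### The vertical factor -/

theorem vertFactor_mul_sin (m : ℕ) (η : ℝ) : vertFactor m η * sin η = sin ((m + 1) * η) := by
  unfold vertFactor
  split_ifs with hη
  · simp [hη]
  · rcases eq_or_ne (sin η) 0 with hsin | hsin
    · simpa [hsin] using Chebyshev.U_real_cos η m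
    · exact div_mul_cancel₀ _ hsin

theorem vertFactor_mul_sin_sq (m : ℕ) (η : ℝ) :
    vertFactor m η * sin η ^ 2 = sin ((m + 1) * η) / sin η * sin η ^ 2 := by
  rw [sq, ← mul_assoc, vertFactor_mul_sin]
  rcases eq_or_ne (sin η) 0 with hsin | hsin
  · simp [hsin]
  · field_simp

theorem abs_vertFactor_le (m : ℕ) (η : ℝ) : |vertFactor m η| ≤ m + 1 := by
  unfold vertFactor
  split_ifs
  · exact (abs_of_nonneg (by positivity)).le
  · rw [abs_div]
    exact div_le_of_le_mul₀ (abs_nonneg _) (by positivity)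
      (by exact_mod_cast abs_sin_nat_mul_le (m + 1) η)

theorem measurable_vertFactor (m : ℕ) : Measurable (vertFactor m) :=
  Measurable.ite (measurableSet_singleton 0) measurable_const (by fun_prop)

/-! ### Growth and summability -/

theorem choose_mul_pow_le_one_add_pow {x : ℝ} (hx : 0 ≤ x) (N k : ℕ) :
    N.choose k * x ^ k ≤ (1 + x) ^ N := by
  rcases le_or_gt k N with hk | hk
  · rw [add_comm, add_pow]
    simpa [mul_comm] using Finset.single_le_sum
      (f := fun i => x ^ i * 1 ^ (N - i) * (N.choose i : ℝ)) (fun i _ => by positivity)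
      (Finset.mem_range_succ_iff.mpr hk)
  · simp only [Nat.choose_eq_zero_of_lt hk, Nat.cast_zero, zero_mul]
    positivity

theorem exists_choose_le_pow_mul_exp {δ : ℝ} (hδ : 0 < δ) :
    ∃ A > 0, ∀ N k : ℕ, (N.choose k : ℝ) ≤ A ^ k * exp (δ * N) := by
  have hx : 0 < exp δ - 1 := sub_pos.mpr (one_lt_exp_iff.mpr hδ)
  refine ⟨(exp δ - 1)⁻¹, inv_pos.mpr hx, fun N k => ?_⟩
  rw [inv_pow, ← div_eq_inv_mul, le_div_iff₀ (pow_pos hx k), mul_comm δ, exp_nat_mul]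
  simpa using choose_mul_pow_le_one_add_pow hx.le N k

theorem exists_pow_mul_choose_le_pow_mul_exp (p : ℕ) {δ : ℝ} (hδ : 0 < δ) :
    ∃ B > 0, ∃ A > 0, ∀ N k : ℕ, (N : ℝ) ^ p * N.choose k ≤ B * (A ^ k * exp (δ * N)) := by
  obtain ⟨A, hA, choose_le⟩ := exists_choose_le_pow_mul_exp (half_pos hδ)
  refine ⟨p ! / (δ / 2) ^ p, by positivity, A, hA, fun N k => ?_⟩
  have pow_le : (N : ℝ) ^ p ≤ p ! / (δ / 2) ^ p * exp (δ / 2 * N) := by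
    have := pow_div_factorial_le_exp (δ / 2 * N) (by positivity) p
    rw [mul_pow, div_le_iff₀ (by positivity)] at this
    rw [div_mul_eq_mul_div, le_div_iff₀ (by positivity)]
    linarith
  calc (N : ℝ) ^ p * N.choose k
      ≤ (p ! / (δ / 2) ^ p * exp (δ / 2 * N)) * (A ^ k * exp (δ / 2 * N)) := by
        gcongr
        exact choose_le N k
    _ = p ! / (δ / 2) ^ p * (A ^ k * exp (δ / 2 * N + δ / 2 * N)) := by rw [exp_add]; ring
    _ = p ! / (δ / 2) ^ p * (A ^ k * exp (δ * N)) := by rw [← add_mul, add_halves]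

theorem summable_pow_mul_exp_neg_mul_sq {a c : ℝ} (ha : 0 < a) (hc : 0 < c) :
    Summable fun k : ℕ => c ^ k * exp (-(a * (k : ℝ) ^ 2)) := by
  refine summable_of_ratio_test_tendsto_lt_one zero_lt_one
    (Eventually.of_forall fun k => by positivity) ?_
  have ratio (k : ℕ) : ‖c ^ (k + 1) * exp (-(a * ((k + 1 : ℕ) : ℝ) ^ 2))‖ /
      ‖c ^ k * exp (-(a * (k : ℝ) ^ 2))‖ = c * exp (-a) * exp (-(2 * a)) ^ k := by
    rw [norm_of_nonneg (by positivity), norm_of_nonneg (by positivity),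
      div_eq_iff (by positivity), ← exp_nat_mul,
      show -(a * ((k + 1 : ℕ) : ℝ) ^ 2) = -a + k * -(2 * a) + -(a * (k : ℝ) ^ 2) by
        push_cast; ring, exp_add, exp_add]
    ring
  have geometric := tendsto_pow_atTop_nhds_zero_of_lt_one (exp_pos (-(2 * a))).le
    (exp_lt_one_iff.mpr (by linarith))
  simpa only [ratio, mul_zero] using geometric.const_mul (c * exp (-a))

theorem hasSum_integral_integral_of_norm_le {ι E : Type*} [Countable ι] [NormedAddCommGroup E]
    [NormedSpace ℝ E] [CompleteSpace E] {F : ι → ℝ → ℝ → E} {bound : ι → ℝ} (a b c d : ℝ)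
    (F_measurable : ∀ i, StronglyMeasurable (Function.uncurry (F i)))
    (F_le : ∀ i x y, ‖F i x y‖ ≤ bound i) (bound_summable : Summable bound) :
    HasSum (fun i => ∫ x in a..b, ∫ y in c..d, F i x y)
      (∫ x in a..b, ∫ y in c..d, ∑' i, F i x y) := by
  have inner (x : ℝ) :
      HasSum (fun i => ∫ y in c..d, F i x y) (∫ y in c..d, ∑' i, F i x y) :=
    intervalIntegral.hasSum_integral_of_dominated_convergence (fun i _ => bound i)
      (fun i => ((F_measurable i).comp_measurable measurable_prodMk_left).aestronglyMeasurable)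
      (fun i => ae_of_all _ fun y _ => F_le i x y) (ae_of_all _ fun _ _ => bound_summable)
      intervalIntegrable_const
      (ae_of_all _ fun y _ => (bound_summable.of_norm_bounded fun i => F_le i x y).hasSum)
  exact intervalIntegral.hasSum_integral_of_dominated_convergence (fun i _ => bound i * |d - c|)
    (fun i => ((F_measurable i).integral_prod_right.sub
      (F_measurable i).integral_prod_right).aestronglyMeasurable)
    (fun i => ae_of_all _ fun x _ =>
      intervalIntegral.norm_integral_le_of_norm_le_const fun y _ => F_le i x y)
    (ae_of_all _ fun _ _ => bound_summable.mul_right _) intervalIntegrable_const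
    (ae_of_all _ fun x _ => inner x)

/-! ### Eigenfunctions of the sub-Laplacian -/

/-- The eigenfunction of the sub-Laplacian of `S^{4n+3}` indexed by `(m, k)`, in cylindric
coordinates. -/
def hopfEigenfunction (n m k : ℕ) (r η : ℝ) : ℝ :=
  vertFactor m η * cos r ^ m * (jacobiPoly k (2 * n - 1) (m + 1)).eval (cos (2 * r))

/-- The eigenvalue, up to sign, of `hopfEigenfunction n m k`. -/
def hopfEigenvalue (n m k : ℕ) : ℝ := 4 * ((k : ℝ) * (k + 2 * n + m + 1) + n * m)

/-- The coefficient `α_{k,m}` of `hopfEigenfunction n m k` in the heat kernel. -/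
def hopfCoeff (n m k : ℕ) : ℝ :=
  Gamma (2 * n) / (2 * π ^ (2 * n + 2)) * (2 * (k : ℝ) + m + 2 * n + 1) * ((m : ℝ) + 1) *
    ((k + m + 2 * n).choose (2 * n - 1) : ℝ)

/-- The density of the Riemannian measure of `S^{4n+3}` with respect to `dr dη`. -/
def cylindricDensity (n : ℕ) (r η : ℝ) : ℝ :=
  8 * π ^ (2 * n + 1) / Gamma (2 * n) * sin r ^ (4 * n - 1) * cos r ^ 3 * sin η ^ 2

theorem IsJacobi.pTerm_eq {J : ℕ → ℕ → ℕ → ℝ → ℝ} (hJ : IsJacobi J) (n : ℕ) (t r η : ℝ)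
    (mk : ℕ × ℕ) :
    pTerm n J t r η mk =
      hopfCoeff n mk.1 mk.2 * exp (-hopfEigenvalue n mk.1 mk.2 * t) *
        hopfEigenfunction n mk.1 mk.2 r η := by
  rw [pTerm, hJ.eq_eval_jacobiPoly, hopfCoeff, hopfEigenvalue, hopfEigenfunction]
  ring

theorem hopfCoeff_nonneg (n m k : ℕ) : 0 ≤ hopfCoeff n m k := by
  have := Gamma_nonneg_of_nonneg (show (0 : ℝ) ≤ 2 * n by positivity)
  unfold hopfCoeff
  positivity

theorem abs_hopfEigenfunction_le (n m k : ℕ) (r η : ℝ) :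
    |hopfEigenfunction n m k r η| ≤ (m + 1) * ((2 * k + (2 * n - 1) + (m + 1)).choose k : ℝ) := by
  have cos_pow_le : |cos r| ^ m ≤ 1 := pow_le_one₀ (abs_nonneg _) (abs_cos_le_one r)
  rw [hopfEigenfunction, abs_mul, abs_mul, abs_pow, ← mul_one (m + 1 : ℝ)]
  gcongr
  · exact abs_vertFactor_le m η
  · exact jacobiPoly.abs_eval_le k (2 * n - 1) (m + 1) ⟨neg_one_le_cos _, cos_le_one _⟩

theorem abs_cylindricDensity_le (n : ℕ) (r η : ℝ) :
    |cylindricDensity n r η| ≤ |8 * π ^ (2 * n + 1) / Gamma (2 * n)| := by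
  have trig_le : |sin r| ^ (4 * n - 1) * |cos r| ^ 3 * |sin η| ^ 2 ≤ 1 :=
    mul_le_one₀ (mul_le_one₀ (pow_le_one₀ (abs_nonneg _) (abs_sin_le_one r)) (by positivity)
      (pow_le_one₀ (abs_nonneg _) (abs_cos_le_one r))) (by positivity)
      (pow_le_one₀ (abs_nonneg _) (abs_sin_le_one η))
  rw [cylindricDensity, mul_assoc, mul_assoc, abs_mul, abs_mul, abs_mul, abs_pow, abs_pow, abs_pow,
    ← mul_assoc (|sin r| ^ _)]
  exact mul_le_of_le_one_right (abs_nonneg _) trig_le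

theorem measurable_hopfEigenfunction (n m k : ℕ) :
    Measurable fun p : ℝ × ℝ => hopfEigenfunction n m k p.2 p.1 := by
  have := measurable_vertFactor m
  have := (jacobiPoly k (2 * n - 1) (m + 1)).continuous.measurable
  unfold hopfEigenfunction
  fun_prop

theorem measurable_cylindricDensity (n : ℕ) :
    Measurable fun p : ℝ × ℝ => cylindricDensity n p.2 p.1 := by
  unfold cylindricDensity
  fun_prop

/-! ### Orthogonality of the eigenfunctions -/

theorem integral_hopfEigenfunction_mul (n m k m' k' : ℕ) :
    ∫ η in (0 : ℝ)..π, ∫ r in (0 : ℝ)..π / 2,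
        hopfEigenfunction n m k r η * hopfEigenfunction n m' k' r η * cylindricDensity n r η =
      8 * π ^ (2 * n + 1) / Gamma (2 * n) *
        (∫ η in (0 : ℝ)..π, sin ((m + 1 : ℕ) * η) * sin ((m' + 1 : ℕ) * η)) *
        ∫ r in (0 : ℝ)..π / 2, (jacobiPoly k (2 * n - 1) (m + 1)).eval (cos (2 * r)) *
          (jacobiPoly k' (2 * n - 1) (m' + 1)).eval (cos (2 * r)) *
          sin r ^ (4 * n - 1) * cos r ^ (m + m' + 3) := by
  have separated (r η : ℝ) :
      hopfEigenfunction n m k r η * hopfEigenfunction n m' k' r η * cylindricDensity n r η =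
        8 * π ^ (2 * n + 1) / Gamma (2 * n) *
          (sin ((m + 1 : ℕ) * η) * sin ((m' + 1 : ℕ) * η)) *
          ((jacobiPoly k (2 * n - 1) (m + 1)).eval (cos (2 * r)) *
            (jacobiPoly k' (2 * n - 1) (m' + 1)).eval (cos (2 * r)) *
            sin r ^ (4 * n - 1) * cos r ^ (m + m' + 3)) := by
    push_cast
    rw [← vertFactor_mul_sin, ← vertFactor_mul_sin, hopfEigenfunction, hopfEigenfunction,
      cylindricDensity]
    ring
  simp only [separated, intervalIntegral.integral_const_mul, intervalIntegral.integral_mul_const]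

theorem integral_hopfEigenfunction_mul_of_ne {n : ℕ} (hn : 1 ≤ n) {m k m' k' : ℕ}
    (h : (m, k) ≠ (m', k')) :
    ∫ η in (0 : ℝ)..π, ∫ r in (0 : ℝ)..π / 2,
      hopfEigenfunction n m k r η * hopfEigenfunction n m' k' r η * cylindricDensity n r η = 0 := by
  rw [integral_hopfEigenfunction_mul]
  rcases eq_or_ne m m' with rfl | hm
  · have hk : k ≠ k' := fun hk => h (by rw [hk])
    rw [show 4 * n - 1 = 2 * (2 * n - 1) + 1 by omega, show m + m + 3 = 2 * (m + 1) + 1 by ring,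
      integral_jacobiPoly_cos_two_mul_of_ne _ _ hk, mul_zero]
  · rw [integral_sin_nat_mul_sin_nat_mul_of_ne (by omega), mul_zero, zero_mul]

theorem hopfCoeff_mul_integral_hopfEigenfunction_mul_self {n : ℕ} (hn : 1 ≤ n) (m k : ℕ) :
    hopfCoeff n m k * ∫ η in (0 : ℝ)..π, ∫ r in (0 : ℝ)..π / 2,
        hopfEigenfunction n m k r η * hopfEigenfunction n m k r η * cylindricDensity n r η =
      (m + 1) * ((k + 2 * n - 1).choose k : ℝ) := by
  have Gamma_ne : Gamma (2 * n) ≠ 0 := (Gamma_pos_of_pos (by positivity)).ne'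
  rw [integral_hopfEigenfunction_mul, hopfCoeff]
  simp only [← sq (sin _)]
  rw [integral_sin_nat_mul_sq m.succ_ne_zero]
  obtain ⟨a, ha⟩ : ∃ a, 2 * n - 1 = a := ⟨_, rfl⟩
  have cast_n : 2 * (n : ℝ) = a + 1 := by exact_mod_cast (by omega : 2 * n = a + 1)
  rw [ha, show 4 * n - 1 = 2 * a + 1 by omega, show m + m + 3 = 2 * (m + 1) + 1 by ring,
    integral_jacobiPoly_cos_two_mul_self, show k + m + 2 * n = a + (m + 1 + k) by omega,
    show k + 2 * n - 1 = k + a by omega, Nat.cast_add_choose, Nat.cast_add_choose,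
    show k + a + (m + 1) = a + (m + 1 + k) by ring, add_comm a k, cast_n,
    show π ^ (2 * n + 2) = π ^ (2 * n + 1) * π by ring]
  rw [cast_n] at Gamma_ne
  push_cast
  field_simp
  ring

/-! ### The heat kernel -/

theorem exp_neg_hopfEigenvalue_mul_le {n : ℕ} (hn : 1 ≤ n) (m k : ℕ) {t : ℝ} (ht : 0 ≤ t) :
    exp (-hopfEigenvalue n m k * t) ≤ exp (-(4 * t) * m) * exp (-(4 * t * (k : ℝ) ^ 2)) := by
  have one_le : (1 : ℝ) ≤ n := by exact_mod_cast hn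
  have base : (m : ℝ) + k ^ 2 ≤ k * (k + 2 * n + m + 1) + n * m := by
    have : (m : ℝ) ≤ n * m := le_mul_of_one_le_left (by positivity) one_le
    have : (0 : ℝ) ≤ k * (2 * n + m + 1) := by positivity
    linarith
  rw [← exp_add, exp_le_exp, hopfEigenvalue]
  linarith [mul_le_mul_of_nonneg_left base (mul_nonneg zero_le_four ht)]

theorem hopfCoeff_mul_choose_le (n m k : ℕ) :
    hopfCoeff n m k * ((m + 1) * ((2 * k + (2 * n - 1) + (m + 1)).choose k : ℝ)) ≤
      Gamma (2 * n) / (2 * π ^ (2 * n + 2)) * (((2 * k + m + 2 * n + 1 : ℕ) : ℝ) ^ (2 * n - 1 + 3) *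
        ((2 * k + m + 2 * n + 1).choose k : ℝ)) := by
  have := Gamma_nonneg_of_nonneg (show (0 : ℝ) ≤ 2 * n by positivity)
  set N := 2 * k + m + 2 * n + 1 with hN
  have linear_eq : 2 * (k : ℝ) + m + 2 * n + 1 = N := by rw [hN]; push_cast; ring
  have succ_le : (m : ℝ) + 1 ≤ N := by exact_mod_cast (by omega : m + 1 ≤ N)
  have choose_le_pow : ((k + m + 2 * n).choose (2 * n - 1) : ℝ) ≤ (N : ℝ) ^ (2 * n - 1) := by
    have : (k + m + 2 * n).choose (2 * n - 1) ≤ N ^ (2 * n - 1) :=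
      (Nat.choose_le_pow _ _).trans (Nat.pow_le_pow_left (by omega) _)
    exact_mod_cast this
  have choose_le : ((2 * k + (2 * n - 1) + (m + 1)).choose k : ℝ) ≤ N.choose k := by
    exact_mod_cast Nat.choose_le_choose k (by omega)
  rw [hopfCoeff, linear_eq]
  calc _ ≤ Gamma (2 * n) / (2 * π ^ (2 * n + 2)) * N * N * (N : ℝ) ^ (2 * n - 1) *
        (N * N.choose k) := by gcongr
    _ = _ := by ring

theorem summable_hopfCoeff_mul_exp_mul_choose {n : ℕ} (hn : 1 ≤ n) {t : ℝ} (ht : 0 < t) :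
    Summable fun mk : ℕ × ℕ => hopfCoeff n mk.1 mk.2 * exp (-hopfEigenvalue n mk.1 mk.2 * t) *
      ((mk.1 + 1) * ((2 * mk.2 + (2 * n - 1) + (mk.1 + 1)).choose mk.2 : ℝ)) := by
  obtain ⟨B, hB, A, hA, growth⟩ := exists_pow_mul_choose_le_pow_mul_exp (2 * n - 1 + 3) ht
  have := Gamma_nonneg_of_nonneg (show (0 : ℝ) ≤ 2 * n by positivity)
  have geometric : Summable fun m : ℕ => exp (m * -(3 * t)) :=
    summable_exp_nat_mul_iff.mpr (by linarith)
  have gaussian : Summable fun k : ℕ =>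
      (A * exp (2 * t)) ^ k * exp (-(4 * t * (k : ℝ) ^ 2)) :=
    summable_pow_mul_exp_neg_mul_sq (by positivity) (by positivity)
  refine Summable.of_nonneg_of_le (fun mk => mul_nonneg
      (mul_nonneg (hopfCoeff_nonneg n _ _) (exp_pos _).le) (by positivity)) ?_
    ((geometric.mul_of_nonneg gaussian (fun _ => by positivity) fun _ => by positivity).mul_left
      (Gamma (2 * n) / (2 * π ^ (2 * n + 2)) * (B * exp (t * (2 * n + 1)))))
  rintro ⟨m, k⟩
  calc hopfCoeff n m k * exp (-hopfEigenvalue n m k * t) *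
        ((m + 1) * ((2 * k + (2 * n - 1) + (m + 1)).choose k : ℝ))
      = hopfCoeff n m k * ((m + 1) * ((2 * k + (2 * n - 1) + (m + 1)).choose k : ℝ)) *
          exp (-hopfEigenvalue n m k * t) := by ring
    _ ≤ Gamma (2 * n) / (2 * π ^ (2 * n + 2)) *
          (B * (A ^ k * exp (t * (2 * k + m + 2 * n + 1 : ℕ)))) *
          (exp (-(4 * t) * m) * exp (-(4 * t * (k : ℝ) ^ 2))) :=
        mul_le_mul ((hopfCoeff_mul_choose_le n m k).trans
            (mul_le_mul_of_nonneg_left (growth _ k) (by positivity)))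
          (exp_neg_hopfEigenvalue_mul_le hn m k ht.le) (exp_pos _).le (by positivity)
    _ = Gamma (2 * n) / (2 * π ^ (2 * n + 2)) * (B * exp (t * (2 * n + 1))) *
          (exp (m * -(3 * t)) * ((A * exp (2 * t)) ^ k * exp (-(4 * t * (k : ℝ) ^ 2)))) := by
        rw [show t * ((2 * k + m + 2 * n + 1 : ℕ) : ℝ) = t * (2 * n + 1) + k * (2 * t) + m * t by
            push_cast; ring,
          show (m : ℝ) * -(3 * t) = m * t + -(4 * t) * m by ring, mul_pow, ← exp_nat_mul,
          exp_add, exp_add, exp_add]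
        ring

theorem IsJacobi.hasSum_integral_pTerm_mul {n : ℕ} (hn : 1 ≤ n) {J : ℕ → ℕ → ℕ → ℝ → ℝ}
    (hJ : IsJacobi J) (m k : ℕ) {t : ℝ} (ht : 0 < t) :
    HasSum (fun mk : ℕ × ℕ => ∫ η in (0 : ℝ)..π, ∫ r in (0 : ℝ)..π / 2,
        pTerm n J t r η mk * (hopfEigenfunction n m k r η * cylindricDensity n r η))
      (∫ η in (0 : ℝ)..π, ∫ r in (0 : ℝ)..π / 2,
        pKernel n J t r η * (hopfEigenfunction n m k r η * cylindricDensity n r η)) := by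
  simp only [pKernel, ← tsum_mul_right]
  refine hasSum_integral_integral_of_norm_le 0 π 0 (π / 2) (fun mk => ?_) (fun mk η r => ?_)
    ((summable_hopfCoeff_mul_exp_mul_choose hn ht).mul_right
      ((m + 1) * ((2 * k + (2 * n - 1) + (m + 1)).choose k : ℝ) *
        |8 * π ^ (2 * n + 1) / Gamma (2 * n)|))
  · simp only [hJ.pTerm_eq]
    exact (((measurable_hopfEigenfunction n mk.1 mk.2).const_mul _).mul
      ((measurable_hopfEigenfunction n m k).mul
        (measurable_cylindricDensity n))).stronglyMeasurable
  · have coeff_nonneg := mul_nonneg (hopfCoeff_nonneg n mk.1 mk.2)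
      (exp_pos (-hopfEigenvalue n mk.1 mk.2 * t)).le
    rw [hJ.pTerm_eq, norm_eq_abs, abs_mul, abs_mul, abs_mul (hopfEigenfunction n m k r η),
      abs_of_nonneg coeff_nonneg]
    exact mul_le_mul
      (mul_le_mul_of_nonneg_left (abs_hopfEigenfunction_le n mk.1 mk.2 r η) coeff_nonneg)
      (mul_le_mul (abs_hopfEigenfunction_le n m k r η) (abs_cylindricDensity_le n r η)
        (abs_nonneg _) (by positivity))
      (by positivity) (mul_nonneg coeff_nonneg (by positivity))

theorem IsJacobi.integral_pTerm_mul {J : ℕ → ℕ → ℕ → ℝ → ℝ} (hJ : IsJacobi J) (n m k : ℕ)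
    (t : ℝ) (mk : ℕ × ℕ) :
    ∫ η in (0 : ℝ)..π, ∫ r in (0 : ℝ)..π / 2,
        pTerm n J t r η mk * (hopfEigenfunction n m k r η * cylindricDensity n r η) =
      hopfCoeff n mk.1 mk.2 * exp (-hopfEigenvalue n mk.1 mk.2 * t) *
        ∫ η in (0 : ℝ)..π, ∫ r in (0 : ℝ)..π / 2, hopfEigenfunction n mk.1 mk.2 r η *
          hopfEigenfunction n m k r η * cylindricDensity n r η := by
  simp only [hJ.pTerm_eq, mul_assoc, intervalIntegral.integral_const_mul]

theorem IsJacobi.integral_pKernel_mul {n : ℕ} (hn : 1 ≤ n) {J : ℕ → ℕ → ℕ → ℝ → ℝ}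
    (hJ : IsJacobi J) (m k : ℕ) {t : ℝ} (ht : 0 < t) :
    ∫ η in (0 : ℝ)..π, ∫ r in (0 : ℝ)..π / 2,
        pKernel n J t r η * (hopfEigenfunction n m k r η * cylindricDensity n r η) =
      exp (-hopfEigenvalue n m k * t) * (m + 1) * ((k + 2 * n - 1).choose k : ℝ) := by
  have termwise := hJ.hasSum_integral_pTerm_mul hn m k ht
  have only_diagonal (mk : ℕ × ℕ) (hmk : mk ≠ (m, k)) :
      ∫ η in (0 : ℝ)..π, ∫ r in (0 : ℝ)..π / 2,
        pTerm n J t r η mk * (hopfEigenfunction n m k r η * cylindricDensity n r η) = 0 := by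
    rw [hJ.integral_pTerm_mul, integral_hopfEigenfunction_mul_of_ne hn hmk, mul_zero]
  rw [termwise.unique (hasSum_single (m, k) only_diagonal), hJ.integral_pTerm_mul,
    mul_right_comm, hopfCoeff_mul_integral_hopfEigenfunction_mul_self hn]
  ring

theorem IsJacobi.hopfEigenfunction_mul_cylindricDensity {J : ℕ → ℕ → ℕ → ℝ → ℝ} (hJ : IsJacobi J)
    (n m k : ℕ) (r η : ℝ) :
    hopfEigenfunction n m k r η * cylindricDensity n r η =
      sin ((m + 1) * η) / sin η * cos r ^ m * J k (2 * n - 1) (m + 1) (cos (2 * r)) *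
        (8 * π ^ (2 * n + 1) / Gamma (2 * n)) * sin r ^ (4 * n - 1) * cos r ^ 3 * sin η ^ 2 := by
  rw [hopfEigenfunction, cylindricDensity, hJ.eq_eval_jacobiPoly]
  linear_combination cos r ^ m * (jacobiPoly k (2 * n - 1) (m + 1)).eval (cos (2 * r)) *
    (8 * π ^ (2 * n + 1) / Gamma (2 * n)) * sin r ^ (4 * n - 1) * cos r ^ 3 *
      vertFactor_mul_sin_sq m η

theorem tendsto_exp_neg_hopfEigenvalue_mul (n m k : ℕ) :
    Tendsto (fun t => exp (-hopfEigenvalue n m k * t)) (𝓝[>] 0) (𝓝 1) := by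
  have : Continuous fun t => exp (-hopfEigenvalue n m k * t) := by fun_prop
  simpa using (this.tendsto 0).mono_left nhdsWithin_le_nhds

end

/-- integrating the subelliptic heat kernel against the eigenfunctions with
respect to the cylindric Riemannian measure of `S^{4n+3}`, and the `t → 0⁺` limit. -/
theorem stmt_1 (n : ℕ) (hn : 1 ≤ n) (J : ℕ → ℕ → ℕ → ℝ → ℝ) (hJ : IsJacobi J)
    (k m : ℕ) :
    (∀ t : ℝ, 0 < t →
      (∫ η in (0:ℝ)..π, ∫ r in (0:ℝ)..(π / 2),
          pKernel n J t r η * (Real.sin ((m + 1) * η) / Real.sin η) * Real.cos r ^ m *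
            J k (2 * n - 1) (m + 1) (Real.cos (2 * r)) *
            (8 * π ^ (2 * n + 1) / Real.Gamma (2 * n)) *
            Real.sin r ^ (4 * n - 1) * Real.cos r ^ 3 * Real.sin η ^ 2) =
        Real.exp (-(4 * ((k : ℝ) * (k + 2 * n + m + 1) + n * m)) * t) *
          ((m : ℝ) + 1) * (Nat.choose (k + 2 * n - 1) k : ℝ)) ∧
    Filter.Tendsto (fun t : ℝ =>
      ∫ η in (0:ℝ)..π, ∫ r in (0:ℝ)..(π / 2),
          pKernel n J t r η * (Real.sin ((m + 1) * η) / Real.sin η) * Real.cos r ^ m *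
            J k (2 * n - 1) (m + 1) (Real.cos (2 * r)) *
            (8 * π ^ (2 * n + 1) / Real.Gamma (2 * n)) *
            Real.sin r ^ (4 * n - 1) * Real.cos r ^ 3 * Real.sin η ^ 2)
      (𝓝[>] 0) (𝓝 (((m : ℝ) + 1) * (Nat.choose (k + 2 * n - 1) k : ℝ))) := by
  have integral_eq (t : ℝ) (ht : 0 < t) := hJ.integral_pKernel_mul hn m k ht
  simp only [hJ.hopfEigenfunction_mul_cylindricDensity, ← mul_assoc] at integral_eq
  refine ⟨integral_eq, ?_⟩
  have limit := ((tendsto_exp_neg_hopfEigenvalue_mul n m k).mul_const ((m : ℝ) + 1)).mul_const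
    ((k + 2 * n - 1).choose k : ℝ)
  rw [one_mul] at limit
  refine limit.congr' ?_
  filter_upwards [self_mem_nhdsWithin] with t ht
  exact (integral_eq t ht).symm
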